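/- arXiv:1910.03745 — 2 statements merged into one kernel-verified Lean document; each statement's English description precedes it below -/
import Mathlib

section
/- Fix ℓ ≥ 3 and let (G,c) be an n-vertex edge-minimal edge-colored graph with no rainbow ℓ-cycle. Let (z,ζ) achieve |N_ζ(z)| = R (the replication number), and let Y be the set of vertices y admitting an (ℓ−1)-vertex rainbow z–y path avoiding the color ζ. If Y is nonempty, then δ^c(G) ≤ n/2 + max{0, 3ℓ + (R−1)·((n+1)/(2|Y|) − 1)}. -/
open Finset

variable {V : Type*}

/-- Number of distinct colors on edges incident to `v`. -/
noncomputable def colorDeg (G : SimpleGraph V) (c : Sym2 V → ℕ) (v : V) : ℕ :=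
  Set.ncard {α : ℕ | ∃ u, G.Adj u v ∧ c s(u, v) = α}

/-- Number of distinct colors `c({u,v})` over `u ∈ N(v) ∩ U`. -/
noncomputable def colorDegOn (G : SimpleGraph V) (c : Sym2 V → ℕ) (v : V) (U : Set V) : ℕ :=
  Set.ncard {α : ℕ | ∃ u ∈ U, G.Adj u v ∧ c s(u, v) = α}

/-- Minimum color-degree `δ^c(G)`. -/
noncomputable def minColorDeg (G : SimpleGraph V) (c : Sym2 V → ℕ) : ℕ :=
  ⨅ v : V, colorDeg G c v

/-- `(G,c)` is edge-minimal: no proper spanning subgraph has the same minimum color-degree. -/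
def EdgeMinimal (G : SimpleGraph V) (c : Sym2 V → ℕ) : Prop :=
  ∀ H : SimpleGraph V, H ≤ G → H ≠ G → minColorDeg H c ≠ minColorDeg G c

/-- `(G,c)` contains a rainbow cycle on `ℓ` vertices. -/
def HasRainbowCycle (G : SimpleGraph V) (c : Sym2 V → ℕ) (ℓ : ℕ) : Prop :=
  ∃ (u : V) (p : G.Walk u u), p.IsCycle ∧ p.length = ℓ ∧ (p.edges.map c).Nodup

/-- There is a rainbow path from `v` to `y` on `k` vertices whose edge colors avoid `C`. -/
def RainbowPathAvoiding (G : SimpleGraph V) (c : Sym2 V → ℕ) (v y : V) (k : ℕ)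
    (C : Set ℕ) : Prop :=
  ∃ p : G.Walk v y, p.IsPath ∧ p.length + 1 = k ∧ (p.edges.map c).Nodup ∧
    ∀ e ∈ p.edges, c e ∉ C

/-- `σ_{v,X}(y)`: the number of colors `X`-separating `y` from `v`. -/
noncomputable def sepCount (G : SimpleGraph V) (c : Sym2 V → ℕ) (v : V) (X : Set V)
    (y : V) : ℕ :=
  Set.ncard {α : ℕ | ∃ x ∈ X, G.Adj x y ∧ c s(x, y) = α ∧ c s(v, x) ≠ α}

/-- `ρ_{v,X}(y)`: the number of colors restricted for `y` by `(v,X)`. -/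
noncomputable def restrCount (G : SimpleGraph V) (c : Sym2 V → ℕ) (v : V) (X : Set V)
    (y : V) : ℕ :=
  Set.ncard {α : ℕ | (∃ x ∈ X, G.Adj x y ∧ c s(x, y) = α ∧ c s(v, x) ≠ α) ∧
    ∀ w, G.Adj w y → w ∉ X → c s(w, y) ≠ α}

/-- The replication number `R(G,c) = max_{v,α} |N_α(v)|`. -/
noncomputable def repNum (G : SimpleGraph V) (c : Sym2 V → ℕ) : ℕ :=
  ⨆ v : V, ⨆ α : ℕ, Set.ncard {u : V | G.Adj u v ∧ c s(u, v) = α}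

/-- `N_!(v)`: neighbors `u` of `v` whose color `c({u,v})` appears on exactly one edge at `v`. -/
def bangNbhd (G : SimpleGraph V) (c : Sym2 V → ℕ) (v : V) : Set V :=
  {u : V | G.Adj u v ∧ Set.ncard {w : V | G.Adj w v ∧ c s(w, v) = c s(u, v)} = 1}

open Classical in
/-- Finset of colors at `v`. -/
noncomputable def colSet [Fintype V] (G : SimpleGraph V) (c : Sym2 V → ℕ) (v : V) : Finset ℕ :=
  (univ.filter (fun u => G.Adj u v)).image (fun u => c s(u, v))

open Classical in
/-- Finset of neighbors of `v` in color `α`. -/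
noncomputable def colNbr [Fintype V] (G : SimpleGraph V) (c : Sym2 V → ℕ) (v : V) (α : ℕ) :
    Finset V :=
  univ.filter (fun u => G.Adj u v ∧ c s(u, v) = α)

open Classical in
/-- Common neighbors of `y`, `z` with equal colors. -/
noncomputable def outSet [Fintype V] (G : SimpleGraph V) (c : Sym2 V → ℕ) (z y : V) :
    Finset V :=
  univ.filter (fun u => G.Adj u z ∧ G.Adj u y ∧ c s(u, z) = c s(u, y))

lemma colSet_card [Fintype V] (G : SimpleGraph V) (c : Sym2 V → ℕ) (v : V) :
    (colSet G c v).card = colorDeg G c v := by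
  classical
  unfold colorDeg
  rw [← Set.ncard_coe_finset]
  congr 1
  ext a
  simp [colSet]

lemma colNbr_ncard [Fintype V] (G : SimpleGraph V) (c : Sym2 V → ℕ) (v : V) (α : ℕ) :
    Set.ncard {u : V | G.Adj u v ∧ c s(u, v) = α} = (colNbr G c v α).card := by
  classical
  rw [← Set.ncard_coe_finset]
  congr 1
  ext a
  simp [colNbr]

lemma colNbr_le [Fintype V] (G : SimpleGraph V) (c : Sym2 V → ℕ) (v : V) (α : ℕ) :
    (colNbr G c v α).card ≤ repNum G c := by
  classical
  unfold repNum
  simp only [colNbr_ncard]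
  have h1 : BddAbove (Set.range (fun α => (colNbr G c v α).card)) :=
    ⟨Fintype.card V, by rintro _ ⟨a, rfl⟩; exact card_le_univ _⟩
  have h2 : BddAbove (Set.range (fun v => ⨆ α, (colNbr G c v α).card)) :=
    ⟨Fintype.card V, by rintro _ ⟨a, rfl⟩; exact ciSup_le (fun _ => card_le_univ _)⟩
  exact (le_ciSup h1 α).trans (le_ciSup h2 v)

lemma min_le [Fintype V] (G : SimpleGraph V) (c : Sym2 V → ℕ) (v : V) :
    minColorDeg G c ≤ colorDeg G c v :=
  ciInf_le (OrderBot.bddBelow _) v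

/-- Edge-minimality: each edge has a color that is unique at one of its ends. -/
lemma edge_unique (G : SimpleGraph V) (c : Sym2 V → ℕ)
    (hmin : EdgeMinimal G c) (u z y : V) (hzy : z ≠ y) (huz : G.Adj u z) (huy : G.Adj u y)
    (hc : c s(u, z) = c s(u, y)) (w : V) (hw : G.Adj w z) (hcw : c s(w, z) = c s(u, z)) :
    w = u := by
  classical
  by_contra hne
  refine hmin (G.deleteEdges {s(u, z)}) (G.deleteEdges_le _) ?_ ?_
  · intro h
    have h2 := huz
    rw [← h] at h2
    simp [SimpleGraph.deleteEdges_adj] at h2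
  · unfold minColorDeg
    congr 1
    ext v
    unfold colorDeg
    congr 1
    ext a
    simp only [Set.mem_ofPred_eq, SimpleGraph.deleteEdges_adj, Set.mem_singleton_iff]
    constructor
    · rintro ⟨x, ⟨hx, _⟩, h⟩
      exact ⟨x, hx, h⟩
    · rintro ⟨x, hx, h⟩
      by_cases he : s(x, v) = s(u, z)
      · have he' := he
        rw [Sym2.eq_iff] at he'
        rcases he' with ⟨rfl, rfl⟩ | ⟨rfl, rfl⟩
        · refine ⟨w, ⟨hw, ?_⟩, by rw [hcw, h]⟩
          intro h3
          rw [Sym2.eq_iff] at h3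
          rcases h3 with ⟨h3, _⟩ | ⟨h3, h4⟩
          · exact hne h3
          · exact hw.ne h3
        · refine ⟨y, ⟨huy.symm, ?_⟩, ?_⟩
          · intro h3
            rw [Sym2.eq_iff] at h3
            rcases h3 with ⟨h3, h4⟩ | ⟨h3, h4⟩
            · exact huy.ne h3.symm
            · exact hzy h3.symm
          · rw [Sym2.eq_swap, ← hc, ← he, h]
      · exact ⟨x, ⟨hx, he⟩, h⟩

lemma cycle_of (G : SimpleGraph V) (c : Sym2 V → ℕ) (ℓ : ℕ) (hno : ¬ HasRainbowCycle G c ℓ)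
    (z y : V) (p : G.Walk z y) (hp : p.IsPath) (hlen : p.length + 2 = ℓ)
    (hr : (p.edges.map c).Nodup) (u : V) (hu : u ∉ p.support) (huz : G.Adj u z)
    (huy : G.Adj u y) (h1 : c s(u, z) ∉ p.edges.map c) (h2 : c s(u, y) ∉ p.edges.map c) :
    c s(u, z) = c s(u, y) := by
  by_contra hne
  apply hno
  have hnd : ((SimpleGraph.Walk.cons huz (p.concat huy.symm)).edges.map c).Nodup := by
    simp only [SimpleGraph.Walk.edges_cons, SimpleGraph.Walk.edges_concat, List.map_cons,
      List.concat_eq_append, List.map_append, List.nodup_cons, List.mem_append, List.map_nil]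
    rw [Sym2.eq_swap (a := y)]
    refine ⟨?_, ?_⟩
    · rintro (h | h)
      · exact h1 h
      · simp at h; exact hne h
    · rw [List.nodup_append]
      refine ⟨hr, by simp, ?_⟩
      intro a ha b hb hab
      simp at hb
      subst hab
      rw [hb] at ha
      exact h2 ha
  refine ⟨u, SimpleGraph.Walk.cons huz (p.concat huy.symm), ?_, ?_, hnd⟩
  · rw [SimpleGraph.Walk.cons_isCycle_iff]
    refine ⟨hp.concat hu _, ?_⟩
    have := List.Nodup.of_map _ hnd
    rw [SimpleGraph.Walk.edges_cons] at this
    exact (List.nodup_cons.1 this).1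
  · simp; omega

lemma local_bound [Fintype V] (G : SimpleGraph V) (c : Sym2 V → ℕ) (ℓ : ℕ) (hl : 3 ≤ ℓ)
    (hmin : EdgeMinimal G c) (hno : ¬ HasRainbowCycle G c ℓ)
    (z : V) (ζ : ℕ) (y : V) (hy : RainbowPathAvoiding G c z y (ℓ - 1) {ζ}) :
    z ≠ y ∧ (colorDeg G c y + colorDeg G c z + (colNbr G c z ζ).card + 6 ≤
      (outSet G c z y).card + Fintype.card V + 3 * ℓ) ∧
    (2 ≤ (colNbr G c z ζ).card →
      (colNbr G c z ζ).card + colorDeg G c y + 5 ≤ Fintype.card V + 2 * ℓ) := by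
  classical
  obtain ⟨p, hp, hlen, hr, hav⟩ := hy
  have hlen2 : p.length + 2 = ℓ := by omega
  have hzy : z ≠ y := by
    rintro rfl
    have := SimpleGraph.Walk.isPath_iff_eq_nil.1 hp
    subst this
    simp at hlen2
    omega
  set C : Finset ℕ := (p.edges.map c).toFinset with hC
  have hCc : C.card ≤ ℓ - 2 := by
    refine (List.toFinset_card_le _).trans ?_
    simp; omega
  have hζ : ζ ∉ C := by
    intro h
    rw [hC, List.mem_toFinset, List.mem_map] at h
    obtain ⟨e, he, h⟩ := h
    exact hav e he (by simp [h])
  set P : Finset V := (p.support.toFinset.erase z).erase y with hP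
  have hPc : P.card ≤ ℓ - 3 := by
    rw [hP, card_erase_of_mem, card_erase_of_mem]
    · have := List.toFinset_card_le p.support
      simp at this
      omega
    · simp
    · simp [hzy.symm]
  set Ny : Finset V := univ.filter (fun u => G.Adj u y ∧ c s(u, y) ∉ C) with hNy
  set Nz : Finset V := univ.filter (fun u => G.Adj u z ∧ c s(u, z) ∉ C) with hNz
  set Nz' : Finset V := univ.filter (fun u => G.Adj u z ∧ c s(u, z) ∉ insert ζ C) with hNz'
  have e1 : colorDeg G c y ≤ Ny.card + (ℓ - 2) := by
    rw [← colSet_card]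
    have : colSet G c y ⊆ Ny.image (fun u => c s(u, y)) ∪ C := by
      intro a ha
      simp only [colSet, mem_image, mem_filter, mem_univ, true_and] at ha
      obtain ⟨u, hu, rfl⟩ := ha
      by_cases h : c s(u, y) ∈ C
      · exact mem_union_right _ h
      · exact mem_union_left _ (mem_image.2 ⟨u, by simp [hNy, hu, h], rfl⟩)
    have h1 := card_le_card this
    have h2 := card_union_le (Ny.image (fun u => c s(u, y))) C
    have h3 : (Ny.image (fun u => c s(u, y))).card ≤ Ny.card := card_image_le
    omega
  have e2 : colorDeg G c z ≤ Nz'.card + (ℓ - 2) + 1 := by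
    rw [← colSet_card]
    have : colSet G c z ⊆ Nz'.image (fun u => c s(u, z)) ∪ insert ζ C := by
      intro a ha
      simp only [colSet, mem_image, mem_filter, mem_univ, true_and] at ha
      obtain ⟨u, hu, rfl⟩ := ha
      by_cases h : c s(u, z) ∈ insert ζ C
      · exact mem_union_right _ h
      · exact mem_union_left _ (mem_image.2 ⟨u, mem_filter.2 ⟨mem_univ _, hu, h⟩, rfl⟩)
    have h1 := card_le_card this
    have h2 := card_union_le (Nz'.image (fun u => c s(u, z))) (insert ζ C)
    have h3 : (Nz'.image (fun u => c s(u, z))).card ≤ Nz'.card := card_image_le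
    have h4 := card_insert_le ζ C
    omega
  have e3 : Nz'.card + (colNbr G c z ζ).card ≤ Nz.card := by
    rw [← card_union_of_disjoint]
    · apply card_le_card
      intro u hu
      simp only [mem_union, hNz', colNbr, mem_filter, mem_univ, true_and, mem_insert, not_or]
        at hu
      simp only [hNz, mem_filter, mem_univ, true_and]
      rcases hu with ⟨a, b, d⟩ | ⟨a, b⟩
      · exact ⟨a, d⟩
      · exact ⟨a, by rw [b]; exact hζ⟩
    · rw [disjoint_left]
      intro u hu hu2
      simp only [hNz', colNbr, mem_filter, mem_univ, true_and, mem_insert, not_or] at hu hu2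
      exact hu.2.1 hu2.2
  have key : Ny ∩ Nz ⊆ outSet G c z y ∪ P := by
    intro u hu
    simp only [mem_inter, hNy, hNz, mem_filter, mem_univ, true_and] at hu
    obtain ⟨⟨a1, a2⟩, b1, b2⟩ := hu
    by_cases h : u ∈ p.support
    · apply mem_union_right
      simp [hP, h, a1.ne, b1.ne]
    · apply mem_union_left
      simp only [outSet, mem_filter, mem_univ, true_and]
      refine ⟨b1, a1, cycle_of G c ℓ hno z y p hp hlen2 hr u h b1 a1 ?_ ?_⟩
      · simpa [hC] using b2
      · simpa [hC] using a2
  have e4 := card_le_card key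
  have e5 := card_union_le (outSet G c z y) P
  have e6 := card_union_add_card_inter Ny Nz
  have e7 : (Ny ∪ Nz).card ≤ Fintype.card V := card_le_univ _
  refine ⟨hzy, by omega, ?_⟩
  intro hR
  have key2 : Ny ∩ colNbr G c z ζ ⊆ P := by
    intro u hu
    have huN : u ∈ Nz := by
      have := (mem_inter.1 hu).2
      simp only [colNbr, mem_filter, mem_univ, true_and] at this
      simp only [hNz, mem_filter, mem_univ, true_and]
      exact ⟨this.1, by rw [this.2]; exact hζ⟩
    rcases mem_union.1 (key (mem_inter.2 ⟨(mem_inter.1 hu).1, huN⟩)) with h | h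
    · exfalso
      simp only [outSet, mem_filter, mem_univ, true_and] at h
      have hz := (mem_inter.1 hu).2
      simp only [colNbr, mem_filter, mem_univ, true_and] at hz
      have : (colNbr G c z ζ).card ≤ 1 := by
        rw [card_le_one]
        intro a ha b hb
        simp only [colNbr, mem_filter, mem_univ, true_and] at ha hb
        rw [edge_unique G c hmin u z y hzy h.1 h.2.1 h.2.2 a ha.1 (by rw [ha.2, hz.2]),
          edge_unique G c hmin u z y hzy h.1 h.2.1 h.2.2 b hb.1 (by rw [hb.2, hz.2])]
      omega
    · exact h
  have f4 := card_le_card key2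
  have f6 := card_union_add_card_inter Ny (colNbr G c z ζ)
  have f7 : (Ny ∪ colNbr G c z ζ).card ≤ Fintype.card V := card_le_univ _
  omega

lemma sum_bound [Fintype V] (G : SimpleGraph V) (c : Sym2 V → ℕ)
    (hmin : EdgeMinimal G c) (z : V) (ζ : ℕ) (Y : Finset V) (hz : ∀ y ∈ Y, z ≠ y)
    (hR : (colNbr G c z ζ).card = repNum G c) (hR1 : 1 ≤ repNum G c) :
    1 ≤ colorDeg G c z ∧
    ∑ y ∈ Y, (outSet G c z y).card ≤ (colorDeg G c z - 1) * (repNum G c - 1) := by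
  classical
  have hζ : ζ ∈ colSet G c z := by
    rw [← hR, Nat.succ_le_iff, card_pos] at hR1
    obtain ⟨x, hx⟩ := hR1
    simp only [colNbr, mem_filter, mem_univ, true_and] at hx
    simp only [colSet, mem_image, mem_filter, mem_univ, true_and]
    exact ⟨x, hx⟩
  refine ⟨by rw [← colSet_card]; exact card_pos.2 ⟨_, hζ⟩, ?_⟩
  set U : Finset V := univ.filter (fun u => G.Adj u z ∧
    ∀ w, G.Adj w z → c s(w, z) = c s(u, z) → w = u) with hU
  have hsub : ∀ y ∈ Y, outSet G c z y = U.filter (fun u => u ∈ outSet G c z y) := by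
    intro y hy
    ext u
    simp only [mem_filter]
    refine ⟨fun h => ⟨?_, h⟩, fun h => h.2⟩
    simp only [outSet, mem_filter, mem_univ, true_and] at h
    simp only [hU, mem_filter, mem_univ, true_and]
    exact ⟨h.1, fun w hw hcw => edge_unique G c hmin u z y (hz y hy) h.1 h.2.1 h.2.2 w hw hcw⟩
  have hsum : ∑ y ∈ Y, (outSet G c z y).card =
      ∑ u ∈ U, (Y.filter (fun y => u ∈ outSet G c z y)).card := by
    rw [sum_congr rfl (fun y hy => congrArg card (hsub y hy))]
    exact sum_card_bipartiteAbove_eq_sum_card_bipartiteBelow (fun y u => u ∈ outSet G c z y)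
  have hin : ∀ u ∈ U, (Y.filter (fun y => u ∈ outSet G c z y)).card ≤ repNum G c - 1 := by
    intro u hu
    simp only [hU, mem_filter, mem_univ, true_and] at hu
    have h1 : z ∈ colNbr G c u (c s(u, z)) := by
      simp only [colNbr, mem_filter, mem_univ, true_and]
      exact ⟨hu.1.symm, by rw [Sym2.eq_swap]⟩
    have h2 : Y.filter (fun y => u ∈ outSet G c z y) ⊆ (colNbr G c u (c s(u, z))).erase z := by
      intro y hy
      simp only [outSet, mem_filter, mem_univ, true_and] at hy
      simp only [colNbr, mem_erase, mem_filter, mem_univ, true_and]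
      exact ⟨(hz y hy.1).symm, hy.2.2.1.symm, by rw [hy.2.2.2, Sym2.eq_swap]⟩
    have h3 := card_le_card h2
    rw [card_erase_of_mem h1] at h3
    have h4 := colNbr_le G c u (c s(u, z))
    omega
  rw [hsum]
  refine (sum_le_card_nsmul U _ _ hin).trans ?_
  rw [smul_eq_mul]
  by_cases h2 : 2 ≤ repNum G c
  · apply Nat.mul_le_mul_right
    rw [← colSet_card, ← card_erase_of_mem hζ]
    apply card_le_card_of_injOn (fun u => c s(u, z))
    · intro u hu
      have hu' := hu
      simp only [hU, coe_filter, mem_univ, true_and, Set.mem_ofPred_eq] at hu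
      simp only [coe_erase, Set.mem_sdiff, mem_coe, Set.mem_singleton_iff, colSet, mem_image,
        mem_filter, mem_univ, true_and]
      refine ⟨⟨u, hu.1, rfl⟩, ?_⟩
      intro he
      have : (colNbr G c z ζ).card ≤ 1 := by
        rw [card_le_one]
        intro a ha b hb
        simp only [colNbr, mem_filter, mem_univ, true_and] at ha hb
        rw [hu.2 a ha.1 (by rw [ha.2, he]), hu.2 b hb.1 (by rw [hb.2, he])]
      omega
    · intro u hu v hv h
      simp only [hU, coe_filter, mem_univ, true_and, Set.mem_ofPred_eq] at hu hv
      exact hv.2 u hu.1 h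
  · have : repNum G c - 1 = 0 := by omega
    simp [this]

lemma arith (Y n d D r l : ℤ) (hY : 1 ≤ Y) (hr : 0 ≤ r) (hl : 3 ≤ l) (hd : d ≤ D) (hn : 0 ≤ n)
    (h2 : Y * (d + D + r - n - 3 * l + 7) ≤ r * (D - 1))
    (h3 : 1 ≤ r → r ≤ n - d + 2 * l - 6)
    (ht : 1 ≤ 2 * d - n) (h1 : r * (n + 1) < Y * (2 * d - n - 6 * l + 2 * r)) : False := by
  rcases hr.eq_or_lt with rfl | hr
  · have h4 : d + D + 0 - n - 3 * l + 7 ≤ 0 := by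
      by_contra h
      push Not at h
      have := mul_pos (by omega : 0 < Y) h
      linarith
    have : Y * (2 * d - n - 6 * l + 2 * 0) ≤ 0 :=
      mul_nonpos_of_nonneg_of_nonpos (by omega) (by omega)
    linarith
  have h3 := h3 (by omega)
  have hd1 : 1 ≤ d := by omega
  have h4 : Y * (2 * d + r - n - 3 * l + 7) ≤ r * (d - 1) := by
    by_cases hYr : Y ≤ r
    · have a1 : Y * (d - 1) ≤ r * (d - 1) := mul_le_mul_of_nonneg_right hYr (by omega)
      have a2 : Y * (d + r - n - 3 * l + 8) ≤ 0 :=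
        mul_nonpos_of_nonneg_of_nonpos (by omega) (by omega)
      linarith
    · have a1 : (Y - r) * (d - 1) ≤ (Y - r) * (D - 1) :=
        mul_le_mul_of_nonneg_left (by omega) (by omega)
      linarith
  have hA : r * (n + 1) * (d - 1) ≤ Y * (2 * d - n - 6 * l + 2 * r) * (d - 1) :=
    mul_le_mul_of_nonneg_right h1.le (by omega)
  have hB : Y * (2 * d + r - n - 3 * l + 7) * (n + 1) ≤ r * (d - 1) * (n + 1) :=
    mul_le_mul_of_nonneg_right h4 (by omega)
  have hC : Y * ((2 * d + r - n - 3 * l + 7) * (n + 1)) ≤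
      Y * ((2 * d - n - 6 * l + 2 * r) * (d - 1)) := by linarith
  have hD := le_of_mul_le_mul_left hC (by omega)
  obtain ⟨t, rfl⟩ : ∃ t, n = 2 * d - t := ⟨2 * d - n, by ring⟩
  have hE : (t + 14) * (2 * d - t + 1) ≤ (2 * r - 6 * l + t) * (t - 3) := by linarith
  have hApos : 0 < 2 * d - (2 * d - t) - 6 * l + 2 * r := by
    by_contra h
    push Not at h
    have := mul_nonpos_of_nonneg_of_nonpos (by omega : 0 ≤ Y) h
    have := mul_nonneg hr.le (by omega : 0 ≤ 2 * d - t + 1)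
    linarith
  have hF : 0 < (t + 14) * (2 * d - t + 1) := mul_pos (by omega) (by omega)
  by_cases h : t ≤ 3
  · have := mul_nonpos_of_nonneg_of_nonpos (by omega : 0 ≤ 2 * r - 6 * l + t)
      (by omega : t - 3 ≤ 0)
    linarith
  · have : (2 * r - 6 * l + t) * (t - 3) ≤ (2 * d - t + 1) * (t - 3) :=
      mul_le_mul_of_nonneg_right (by omega) (by omega)
    nlinarith

theorem stmt6 (ℓ : ℕ) (hl : 3 ≤ ℓ) [Fintype V] (G : SimpleGraph V) (c : Sym2 V → ℕ)
    (hmin : EdgeMinimal G c) (hno : ¬ HasRainbowCycle G c ℓ)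
    (z : V) (ζ : ℕ)
    (hmaxpair : Set.ncard {u : V | G.Adj u z ∧ c s(u, z) = ζ} = repNum G c)
    (Y : Set V) (hYdef : Y = {y : V | RainbowPathAvoiding G c z y (ℓ - 1) {ζ}})
    (hY : Y.Nonempty) :
    (minColorDeg G c : ℚ) ≤ (Fintype.card V : ℚ) / 2 +
      max 0 (3 * ℓ + ((repNum G c : ℚ) - 1) *
        (((Fintype.card V : ℚ) + 1) / (2 * Y.ncard) - 1)) := by
  classical
  rw [colNbr_ncard] at hmaxpair
  have hloc : ∀ y ∈ Y.toFinset, _ := fun y hy =>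
    local_bound G c ℓ hl hmin hno z ζ y (by rw [Set.mem_toFinset, hYdef] at hy; exact hy)
  obtain ⟨y, hy⟩ := hY
  have hyF : y ∈ Y.toFinset := by simpa using hy
  have hYc : Y.ncard = Y.toFinset.card := Set.ncard_eq_toFinset_card' Y
  have hYpos : 1 ≤ Y.toFinset.card := card_pos.2 ⟨y, hyF⟩
  have hR1 : 1 ≤ repNum G c := by
    have hz := (hloc y hyF).1
    rw [hYdef] at hy
    obtain ⟨p, -⟩ := hy
    cases p with
    | nil => exact absurd rfl hz
    | @cons _ w _ h q =>
      refine le_trans ?_ (colNbr_le G c z (c s(w, z)))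
      apply card_pos.2
      refine ⟨w, ?_⟩
      simp only [colNbr, mem_filter, mem_univ, true_and]
      exact ⟨h.symm, trivial⟩
  obtain ⟨hD1, hs⟩ := sum_bound G c hmin z ζ Y.toFinset (fun y hy => (hloc y hy).1) hmaxpair hR1
  have hlow : ∀ y ∈ Y.toFinset, ((minColorDeg G c : ℤ) + colorDeg G c z + (repNum G c - 1)
      - Fintype.card V - 3 * ℓ + 7) ≤ ((outSet G c z y).card : ℤ) := by
    intro y hy
    have h1 := (hloc y hy).2.1
    have h2 := min_le G c y
    omega
  have hsumlow := card_nsmul_le_sum _ _ _ hlow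
  rw [nsmul_eq_mul] at hsumlow
  have hs' : (∑ y ∈ Y.toFinset, ((outSet G c z y).card : ℤ)) ≤
      ((repNum G c : ℤ) - 1) * ((colorDeg G c z : ℤ) - 1) := by
    have : ((∑ y ∈ Y.toFinset, (outSet G c z y).card : ℕ) : ℤ) ≤
      (((colorDeg G c z - 1) * (repNum G c - 1) : ℕ) : ℤ) := by exact_mod_cast hs
    push_cast [Nat.cast_sub hD1, Nat.cast_sub hR1] at this
    linarith
  by_contra hcon
  push Not at hcon
  rw [hYc] at hcon
  have c1 : (Fintype.card V : ℚ) < 2 * minColorDeg G c := by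
    have := le_max_left (0 : ℚ) (3 * ℓ + ((repNum G c : ℚ) - 1) *
        (((Fintype.card V : ℚ) + 1) / (2 * Y.toFinset.card) - 1))
    linarith
  have c2 : ((repNum G c : ℚ) - 1) * (Fintype.card V + 1) < Y.toFinset.card *
      (2 * minColorDeg G c - Fintype.card V - 6 * ℓ + 2 * ((repNum G c : ℚ) - 1)) := by
    have := le_max_right (0 : ℚ) (3 * ℓ + ((repNum G c : ℚ) - 1) *
        (((Fintype.card V : ℚ) + 1) / (2 * Y.toFinset.card) - 1))
    have h0 := this.trans_lt (lt_sub_iff_add_lt'.2 hcon)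
    have hYq : (0 : ℚ) < Y.toFinset.card := by exact_mod_cast hYpos
    have h5 := mul_lt_mul_of_pos_left h0 (by positivity : (0 : ℚ) < 2 * Y.toFinset.card)
    have h6 : 2 * (Y.toFinset.card : ℚ) * (((Fintype.card V : ℚ) + 1) / (2 * Y.toFinset.card))
      = Fintype.card V + 1 := by field_simp
    have h7 : 2 * (Y.toFinset.card : ℚ) * (3 * ℓ + ((repNum G c : ℚ) - 1) *
        (((Fintype.card V : ℚ) + 1) / (2 * Y.toFinset.card) - 1)) =
        6 * ℓ * Y.toFinset.card + ((repNum G c : ℚ) - 1) * (2 * (Y.toFinset.card : ℚ) *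
        (((Fintype.card V : ℚ) + 1) / (2 * Y.toFinset.card))) -
        2 * Y.toFinset.card * ((repNum G c : ℚ) - 1) := by ring
    rw [h7, h6] at h5
    linarith
  have c1' : (Fintype.card V : ℤ) < 2 * minColorDeg G c := by exact_mod_cast c1
  have c2' : ((repNum G c : ℤ) - 1) * (Fintype.card V + 1) < Y.toFinset.card *
      (2 * minColorDeg G c - Fintype.card V - 6 * ℓ + 2 * ((repNum G c : ℤ) - 1)) := by
    exact_mod_cast c2
  refine arith Y.toFinset.card (Fintype.card V) (minColorDeg G c) (colorDeg G c z)
    (repNum G c - 1) ℓ (by omega) (by omega) (by omega) ?_ (by omega) (hsumlow.trans hs') ?_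
    (by omega) c2'
  · exact_mod_cast min_le G c z
  · intro h
    have h1 := (hloc y hyF).2.2 (by omega)
    have h2 := min_le G c y
    omega
end

section
/- Fix an integer ℓ ≥ 3. Every n-vertex edge-colored graph (G,c) with no rainbow ℓ-cycle satisfies δ^c(G) ≤ n/2 + 3ℓ. -/
open Finset

variable {V : Type*}

open Classical in
noncomputable def colF [Fintype V] (G : SimpleGraph V) (c : Sym2 V → ℕ) (v : V) : Finset ℕ :=
  (univ.filter (fun u => G.Adj u v)).image (fun u => c s(u, v))

lemma mem_colF [Fintype V] (G : SimpleGraph V) (c : Sym2 V → ℕ) (v : V) (a : ℕ) :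
    a ∈ colF G c v ↔ ∃ u, G.Adj u v ∧ c s(u, v) = a := by
  simp [colF]

lemma colF_card [Fintype V] (G : SimpleGraph V) (c : Sym2 V → ℕ) (v : V) :
    (colF G c v).card = colorDeg G c v := by
  unfold colorDeg
  rw [← Set.ncard_coe_finset]
  congr 1
  ext a
  simp [mem_colF]

/-- Rainbow path of length `k` avoiding color `a`. -/
def GoodP (G : SimpleGraph V) (c : Sym2 V → ℕ) (a : ℕ) (v : V) (k : ℕ) (y : V) : Prop :=
  ∃ p : G.Walk v y, p.IsPath ∧ p.length = k ∧ (p.edges.map c).Nodup ∧ a ∉ p.edges.map c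

open Classical in
lemma good_step [Fintype V] (G : SimpleGraph V) (c : Sym2 V → ℕ) (a : ℕ) (v w : V) (k : ℕ)
    (h : GoodP G c a v k w) :
    (colF G c w).card ≤ (univ.filter (GoodP G c a v (k+1))).card + (2 * k + 2) := by
  obtain ⟨p, hp, hk, hn, ha⟩ := h
  have hsub : colF G c w ⊆ ((univ.filter (GoodP G c a v (k+1))).image (fun u => c s(u, w))) ∪
      (p.support.toFinset.image (fun u => c s(u, w)) ∪ ((p.edges.map c).toFinset ∪ {a})) := by
    intro b hb
    obtain ⟨u, hu, rfl⟩ := (mem_colF G c w b).1 hb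
    by_cases h1 : u ∈ p.support
    · apply mem_union_right; apply mem_union_left
      exact mem_image.2 ⟨u, by simpa using h1, rfl⟩
    by_cases h2 : c s(u, w) ∈ p.edges.map c
    · apply mem_union_right; apply mem_union_right; apply mem_union_left
      simpa using h2
    by_cases h3 : c s(u, w) = a
    · simp [h3]
    apply mem_union_left
    refine mem_image.2 ⟨u, ?_, rfl⟩
    simp only [mem_filter, mem_univ, true_and]
    have e : s(w, u) = s(u, w) := Sym2.eq_swap
    refine ⟨p.concat hu.symm, hp.concat h1 hu.symm, by simp [hk], ?_, ?_⟩
    · rw [SimpleGraph.Walk.edges_concat, List.concat_eq_append, List.map_append,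
        List.nodup_append]
      refine ⟨hn, by simp, ?_⟩
      intro x hx y hy hxy
      simp only [List.map_cons, List.map_nil, List.mem_singleton] at hy
      rw [e] at hy
      exact h2 (by rw [← hy, ← hxy]; exact hx)
    · rw [SimpleGraph.Walk.edges_concat, List.concat_eq_append, List.map_append,
        List.mem_append]
      rintro (h | h)
      · exact ha h
      · simp only [List.map_cons, List.map_nil, List.mem_singleton] at h
        rw [e] at h
        exact h3 h.symm
  have h0 := card_le_card hsub
  have h1 := card_union_le ((univ.filter (GoodP G c a v (k+1))).image (fun u => c s(u, w)))
      (p.support.toFinset.image (fun u => c s(u, w)) ∪ ((p.edges.map c).toFinset ∪ {a}))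
  have h2 := card_union_le (p.support.toFinset.image (fun u => c s(u, w)))
    ((p.edges.map c).toFinset ∪ {a})
  have h3 := card_union_le (p.edges.map c).toFinset {a}
  have h4 : ((univ.filter (GoodP G c a v (k+1))).image (fun u => c s(u, w))).card ≤ _ :=
    card_image_le
  have h5 : (p.support.toFinset.image (fun u => c s(u, w))).card ≤ _ := card_image_le
  have h6 := List.toFinset_card_le p.support
  have h7 := List.toFinset_card_le (p.edges.map c)
  simp only [List.length_map, SimpleGraph.Walk.length_edges, SimpleGraph.Walk.length_support,
    card_singleton] at *
  omega

lemma good_exists [Fintype V] (G : SimpleGraph V) (c : Sym2 V → ℕ) (a : ℕ) (v : V) (d : ℕ)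
    (hd : ∀ w, d ≤ (colF G c w).card) (k : ℕ) (hk : 2 * k < d) : ∃ w, GoodP G c a v k w := by
  classical
  induction k with
  | zero => exact ⟨v, SimpleGraph.Walk.nil, by simp, by simp, by simp, by simp⟩
  | succ k ih =>
    obtain ⟨w, hw⟩ := ih (by omega)
    have h1 := good_step G c a v w k hw
    have h2 := hd w
    have : 0 < (univ.filter (GoodP G c a v (k+1))).card := by omega
    obtain ⟨y, hy⟩ := card_pos.1 this
    exact ⟨y, by simpa using hy⟩

lemma close_cycle (G : SimpleGraph V) (c : Sym2 V → ℕ) {v y x : V} (p : G.Walk v y)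
    (hp : p.IsPath) (hn : (p.edges.map c).Nodup) (hx : x ∉ p.support)
    (hxy : G.Adj x y) (hxv : G.Adj x v) (h1 : c s(x, y) ∉ p.edges.map c)
    (h2 : c s(x, v) ∉ p.edges.map c) (h3 : c s(x, v) ≠ c s(x, y)) :
    HasRainbowCycle G c (p.length + 2) := by
  have e : s(y, x) = s(x, y) := Sym2.eq_swap
  have hnod : ((SimpleGraph.Walk.cons hxv (p.concat hxy.symm)).edges.map c).Nodup := by
    rw [SimpleGraph.Walk.edges_cons, SimpleGraph.Walk.edges_concat, List.concat_eq_append, e,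
      List.map_cons, List.map_append, List.nodup_cons, List.nodup_append]
    refine ⟨?_, hn, by simp, ?_⟩
    · rw [List.mem_append]
      rintro (h | h)
      · exact h2 h
      · simp only [List.map_cons, List.map_nil, List.mem_singleton] at h
        exact h3 h
    · intro z hz t ht hzt
      simp only [List.map_cons, List.map_nil, List.mem_singleton] at ht
      exact h1 (by rw [← ht, ← hzt]; exact hz)
  refine ⟨x, SimpleGraph.Walk.cons hxv (p.concat hxy.symm), ?_, by simp, hnod⟩
  rw [SimpleGraph.Walk.cons_isCycle_iff]
  refine ⟨hp.concat hx hxy.symm, fun h => ?_⟩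
  rw [SimpleGraph.Walk.edges_cons, List.map_cons, List.nodup_cons] at hnod
  exact hnod.1 (List.mem_map_of_mem h)

open Classical in
lemma main_nat (k : ℕ) [Fintype V] (G : SimpleGraph V) (c : Sym2 V → ℕ) (d : ℕ)
    (hd : ∀ w, d ≤ (colF G c w).card) [Nonempty V]
    (hbig : Fintype.card V + 6 * (k + 3) < 2 * d) :
    HasRainbowCycle G c (k + 3) := by
  by_contra hno
  let r : V → ℕ → Finset V := fun v b => univ.filter (fun u => G.Adj u v ∧ c s(u, v) = b)
  obtain ⟨⟨v, a0⟩, hmax⟩ := Finite.exists_max (fun q : V × V => (r q.1 (c s(q.2, q.1))).card)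
  set α := c s(a0, v) with hα
  set A := r v α with hA
  set R := A.card with hR
  have hRmax : ∀ x u : V, (r x (c s(u, x))).card ≤ R := fun x u => hmax (x, u)
  -- choose the other colors at `v`
  have herase : d - 1 ≤ ((colF G c v).erase α).card := by
    have := pred_card_le_card_erase (s := colF G c v) (a := α)
    have := hd v
    omega
  obtain ⟨B, hBsub, hBcard⟩ := exists_subset_card_eq herase
  have hrep : ∀ b, ∃ u, b ∈ B → (G.Adj u v ∧ c s(u, v) = b) := by
    intro b
    by_cases hb : b ∈ B
    · obtain ⟨u, hu⟩ := (mem_colF G c v b).1 (mem_of_mem_erase (hBsub hb))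
      exact ⟨u, fun _ => hu⟩
    · exact ⟨v, fun h => absurd h hb⟩
  choose rep hrep using hrep
  have hαB : α ∉ B := fun h => (notMem_erase α _) (hBsub h)
  have hinj : Set.InjOn rep B := by
    intro x hx y hy hxy
    rw [← (hrep x hx).2, ← (hrep y hy).2, hxy]
  set X := A ∪ B.image rep with hX
  have hXcard : X.card = R + (d - 1) := by
    rw [hX, card_union_of_disjoint, card_image_of_injOn hinj, hBcard]
    rw [disjoint_left]
    intro u hu hu'
    obtain ⟨b, hb, rfl⟩ := mem_image.1 hu'
    have h1 : c s(rep b, v) = α := (mem_filter.1 hu).2.2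
    rw [(hrep b hb).2] at h1
    exact hαB (h1 ▸ hb)
  have hXn : X.card ≤ Fintype.card V := card_le_univ X
  have hXadj : ∀ x ∈ X, G.Adj x v := by
    intro x hx
    rcases mem_union.1 hx with h | h
    · exact (mem_filter.1 h).2.1
    · obtain ⟨b, hb, rfl⟩ := mem_image.1 h
      exact (hrep b hb).1
  -- the reachable set
  set Y := univ.filter (GoodP G c α v (k + 1)) with hY
  have hYcard : d ≤ Y.card + (2 * k + 2) := by
    obtain ⟨w, hw⟩ := good_exists G c α v d hd k (by omega)
    exact (hd w).trans (good_step G c α v w k hw)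
  -- lower bound on in-arcs
  let T : V → Finset ℕ := fun y => B.filter (fun b => G.Adj (rep b) y ∧ c s(rep b, y) = b)
  have hlow : ∀ y ∈ Y, R + 3 * (k + 3) ≤ (T y).card := by
    intro y hy
    obtain ⟨p, hp, hk, hn, ha⟩ := (mem_filter.1 hy).2
    have hsub : colF G c y ⊆ T y ∪ ((univ \ X).image (fun u => c s(u, y)) ∪
        (p.support.toFinset.image (fun u => c s(u, y)) ∪ ((p.edges.map c).toFinset ∪
        ((p.edges.map c).toFinset.image (fun b => c s(rep b, y)) ∪ {α})))) := by
      intro b hb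
      obtain ⟨x, hx, rfl⟩ := (mem_colF G c y b).1 hb
      by_cases hxX : x ∉ X
      · apply mem_union_right; apply mem_union_left
        exact mem_image.2 ⟨x, by simpa using hxX, rfl⟩
      push Not at hxX
      by_cases h1 : x ∈ p.support
      · iterate 2 apply mem_union_right
        apply mem_union_left
        exact mem_image.2 ⟨x, by simpa using h1, rfl⟩
      by_cases h2 : c s(x, y) ∈ p.edges.map c
      · iterate 3 apply mem_union_right
        apply mem_union_left
        exact List.mem_toFinset.2 h2
      by_cases h3 : c s(x, y) = α
      · iterate 5 apply mem_union_right
        exact mem_singleton.2 h3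
      by_cases h4 : c s(x, v) ∈ p.edges.map c
      · iterate 4 apply mem_union_right
        apply mem_union_left
        rcases mem_union.1 hxX with h | h
        · exact absurd ((mem_filter.1 h).2.2 ▸ h4) ha
        · obtain ⟨b, hbB, rfl⟩ := mem_image.1 h
          rw [(hrep b hbB).2] at h4
          exact mem_image.2 ⟨b, List.mem_toFinset.2 h4, rfl⟩
      by_cases h5 : c s(x, v) = c s(x, y)
      · apply mem_union_left
        rcases mem_union.1 hxX with h | h
        · exact absurd (h5.symm.trans (mem_filter.1 h).2.2) h3
        · obtain ⟨b, hbB, rfl⟩ := mem_image.1 h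
          rw [(hrep b hbB).2] at h5
          rw [← h5]
          exact mem_filter.2 ⟨hbB, hx, h5.symm⟩
      · exfalso
        apply hno
        have := close_cycle G c p hp hn h1 hx (hXadj x hxX) h2 h4 h5
        rw [hk] at this
        exact this
    have c0 := card_le_card hsub
    have c1 := card_union_le (T y) ((univ \ X).image (fun u => c s(u, y)) ∪
        (p.support.toFinset.image (fun u => c s(u, y)) ∪ ((p.edges.map c).toFinset ∪
        ((p.edges.map c).toFinset.image (fun b => c s(rep b, y)) ∪ {α}))))
    have c2 := card_union_le ((univ \ X).image (fun u => c s(u, y)))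
        (p.support.toFinset.image (fun u => c s(u, y)) ∪ ((p.edges.map c).toFinset ∪
        ((p.edges.map c).toFinset.image (fun b => c s(rep b, y)) ∪ {α})))
    have c3 := card_union_le (p.support.toFinset.image (fun u => c s(u, y)))
        ((p.edges.map c).toFinset ∪
        ((p.edges.map c).toFinset.image (fun b => c s(rep b, y)) ∪ {α}))
    have c4 := card_union_le (p.edges.map c).toFinset
        ((p.edges.map c).toFinset.image (fun b => c s(rep b, y)) ∪ {α})
    have c5 := card_union_le ((p.edges.map c).toFinset.image (fun b => c s(rep b, y))) {α}
    have e1 : ((univ \ X).image (fun u => c s(u, y))).card ≤ _ := card_image_le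
    have e2 : (p.support.toFinset.image (fun u => c s(u, y))).card ≤ _ := card_image_le
    have e3 : ((p.edges.map c).toFinset.image (fun b => c s(rep b, y))).card ≤ _ :=
      card_image_le
    have e4 := List.toFinset_card_le p.support
    have e5 := List.toFinset_card_le (p.edges.map c)
    have e6 : (univ \ X).card = Fintype.card V - X.card := by
      rw [card_sdiff_of_subset (subset_univ _), card_univ]
    have e7 := hd y
    rw [List.length_map, SimpleGraph.Walk.length_edges] at e5
    rw [SimpleGraph.Walk.length_support] at e4
    rw [card_singleton] at c5
    omega
  -- double counting
  have hdc : ∑ y ∈ Y, (T y).card =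
      ∑ b ∈ B, (Y.filter (fun y => G.Adj (rep b) y ∧ c s(rep b, y) = b)).card :=
    sum_card_bipartiteAbove_eq_sum_card_bipartiteBelow
      (fun y b => G.Adj (rep b) y ∧ c s(rep b, y) = b)
  have hup : ∀ b ∈ B,
      (Y.filter (fun y => G.Adj (rep b) y ∧ c s(rep b, y) = b)).card ≤ R := by
    intro b hb
    refine le_trans (card_le_card ?_) (hRmax (rep b) v)
    intro y hy
    obtain ⟨-, h1, h2⟩ := mem_filter.1 hy
    refine mem_filter.2 ⟨mem_univ _, h1.symm, ?_⟩
    rw [Sym2.eq_swap, h2, Sym2.eq_swap, (hrep b hb).2]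
  have hL := card_nsmul_le_sum Y (fun y => (T y).card) _ hlow
  have hU := sum_le_card_nsmul B _ _ hup
  rw [hdc] at hL
  have hfin := hL.trans hU
  rw [smul_eq_mul, smul_eq_mul, hBcard] at hfin
  have hRd : R + 6 * (k + 3) ≤ d := by omega
  obtain ⟨t, rfl⟩ := Nat.exists_eq_add_of_le hRd
  have h1 : (R + 6 * (k + 3) + t - (2 * k + 2)) * (R + 3 * (k + 3)) ≤
      Y.card * (R + 3 * (k + 3)) := Nat.mul_le_mul_right _ (by omega)
  have e1 : R + 6 * (k + 3) + t - (2 * k + 2) = R + 4 * k + 16 + t := by omega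
  have e2 : R + 6 * (k + 3) + t - 1 = R + 6 * k + 17 + t := by omega
  rw [e1] at h1
  rw [e2] at hfin
  have := h1.trans hfin
  nlinarith [Nat.zero_le (R * k), Nat.zero_le (R * t), Nat.zero_le (t * k),
    Nat.zero_le (k * k)]

theorem stmt7 (ℓ : ℕ) (hl : 3 ≤ ℓ) [Fintype V] (G : SimpleGraph V) (c : Sym2 V → ℕ)
    (hno : ¬ HasRainbowCycle G c ℓ) :
    (minColorDeg G c : ℚ) ≤ (Fintype.card V : ℚ) / 2 + 3 * ℓ := by
  by_contra hlt
  push Not at hlt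
  obtain ⟨k, rfl⟩ : ∃ k, ℓ = k + 3 := ⟨ℓ - 3, by omega⟩
  have hbig : Fintype.card V + 6 * (k + 3) < 2 * minColorDeg G c := by
    have h : ((Fintype.card V + 6 * (k + 3) : ℕ) : ℚ) < ((2 * minColorDeg G c : ℕ) : ℚ) := by
      push_cast at hlt ⊢
      linarith
    exact_mod_cast h
  have hne : Nonempty V := by
    by_contra h
    rw [not_nonempty_iff] at h
    have : minColorDeg G c = 0 := by simp [minColorDeg]
    omega
  refine hno (main_nat k G c (minColorDeg G c) (fun w => ?_) hbig)
  rw [colF_card]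
  exact ciInf_le (OrderBot.bddBelow _) w
end
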